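/- For the Féjer test function φ(x) = (sin(πδx)/(πδx))², whose Fourier transform is φ̂(y) = δ^{-1} max(1 - |y|/δ, 0), one has ∫_{ℝ} φ(x)·(1 + sin(2πx)/(2πx)) dx = 2/δ - 1/(2δ²) when δ ≥ 1. -/

import Mathlib

open Real MeasureTheory

noncomputable def fejerTri (δ y : ℝ) : ℝ := max (1 - |y| / δ) 0 / δ

noncomputable def fejerPhi (δ x : ℝ) : ℝ :=
  (Real.sin (Real.pi * δ * x) / (Real.pi * δ * x)) ^ 2

lemma fejerTri_cont (δ : ℝ) : Continuous (fejerTri δ) := by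
  unfold fejerTri
  fun_prop

lemma fejerTri_zero {δ : ℝ} (hδ : 0 < δ) {y : ℝ} (hy : δ ≤ |y|) : fejerTri δ y = 0 := by
  unfold fejerTri
  have : 1 ≤ |y| / δ := by rwa [le_div_iff₀ hδ, one_mul]
  rw [max_eq_right (by linarith)]
  simp

lemma fejerTri_int {δ : ℝ} (hδ : 0 < δ) : Integrable (fejerTri δ) := by
  apply (fejerTri_cont δ).integrable_of_hasCompactSupport
  apply HasCompactSupport.intro (isCompact_Icc (a := -δ) (b := δ))
  intro x hx
  apply fejerTri_zero hδ
  by_contra! h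
  exact hx ⟨(abs_lt.1 h).1.le, (abs_lt.1 h).2.le⟩

lemma fejerTri_cos {δ : ℝ} (hδ : 0 < δ) {x : ℝ} (hx : x ≠ 0) :
    ∫ y, fejerTri δ y * Real.cos (2 * π * x * y) = fejerPhi δ x := by
  have h1 : ∀ y, fejerTri δ y * Real.cos (2 * π * x * y) =
      (fun u => fejerTri δ u * Real.cos (2 * π * x * u)) |y| := by
    intro y
    rcases abs_choice y with h | h <;> simp [h, fejerTri]
  rw [integral_congr_ae (Filter.Eventually.of_forall h1),
    integral_comp_abs (f := fun u => fejerTri δ u * Real.cos (2 * π * x * u))]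
  have h2 : ∫ y in Set.Ioi (0:ℝ), fejerTri δ y * Real.cos (2 * π * x * y) =
      ∫ y in Set.Ioc (0:ℝ) δ, fejerTri δ y * Real.cos (2 * π * x * y) := by
    apply setIntegral_eq_of_subset_of_forall_diff_eq_zero measurableSet_Ioi
      Set.Ioc_subset_Ioi_self
    rintro y ⟨hy, hy'⟩
    rw [fejerTri_zero hδ, zero_mul]
    by_contra! h
    exact hy' ⟨hy, (le_abs_self y).trans h.le⟩
  rw [h2, ← intervalIntegral.integral_of_le hδ.le]
  have hw : 2 * π * x ≠ 0 := by positivity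
  have h3 : ∫ y in (0:ℝ)..δ, fejerTri δ y * Real.cos (2 * π * x * y) =
      ∫ y in (0:ℝ)..δ, (1 - y / δ) / δ * Real.cos (2 * π * x * y) := by
    apply intervalIntegral.integral_congr
    intro y hy
    rw [Set.uIcc_of_le hδ.le] at hy
    have : y / δ ≤ 1 := by rw [div_le_one hδ]; exact hy.2
    simp only [fejerTri, abs_of_nonneg hy.1]
    rw [max_eq_left (by linarith)]
  rw [h3]
  generalize hW : 2 * π * x = w at *
  have h4 : ∀ y ∈ Set.uIcc 0 δ, HasDerivAt (fun y => ((1 - y / δ) * Real.sin (w * y) / w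
      - Real.cos (w * y) / (δ * w ^ 2)) / δ) ((1 - y / δ) / δ * Real.cos (w * y)) y := by
    intro y _
    have a : HasDerivAt (fun y => w * y) w y := by simpa using (hasDerivAt_id y).const_mul w
    have b : HasDerivAt (fun y => 1 - y / δ) (-(1 / δ)) y := by
      simpa using ((hasDerivAt_id y).div_const δ).const_sub 1
    convert! ((((b.mul a.sin).div_const w).sub (a.cos.div_const (δ * w ^ 2))).div_const δ) using 1
    field_simp
    ring
  rw [intervalIntegral.integral_eq_sub_of_hasDerivAt h4
    (Continuous.intervalIntegrable (by fun_prop) _ _)]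
  have h5 : Real.cos (w * δ) = 1 - 2 * Real.sin (π * δ * x) ^ 2 := by
    rw [show w * δ = 2 * (π * δ * x) by rw [← hW]; ring, Real.cos_two_mul, Real.cos_sq']
    ring
  rw [h5]
  have h6 : π * δ * x = w * δ / 2 := by rw [← hW]; ring
  unfold fejerPhi
  rw [h6]
  simp
  field_simp
  ring

lemma fejer_ft {δ : ℝ} (hδ : 0 < δ) {x : ℝ} (hx : x ≠ 0) :
    FourierTransform.fourier (fun y => (fejerTri δ y : ℂ)) x = (fejerPhi δ x : ℂ) := by
  rw [fourier_real_eq_integral_exp_smul, ← fejerTri_cos hδ hx]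
  set g : ℝ → ℂ := fun v => Complex.exp (↑(-2 * π * v * x) * Complex.I) • (fejerTri δ v : ℂ)
  have hg : Integrable g := by
    refine (fejerTri_int hδ).norm.mono' ?_ ?_
    · have := fejerTri_cont δ
      exact Continuous.aestronglyMeasurable (by fun_prop)
    · refine Filter.Eventually.of_forall fun v => ?_
      simp only [g, norm_smul, Complex.norm_exp_ofReal_mul_I, one_mul, Complex.norm_real]
      exact le_rfl
  have h1 : ∫ v, g (-v) = ∫ v, g v := integral_neg_eq_self g volume
  have h2 : ∫ v, (g v + g (-v)) = 2 * ∫ v, g v := by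
    rw [integral_add hg hg.comp_neg, h1]; ring
  have h3 : ∀ v, g v + g (-v) = 2 * ((fejerTri δ v * Real.cos (2 * π * x * v) : ℝ) : ℂ) := by
    intro v
    simp only [g, smul_eq_mul]
    have e : fejerTri δ (-v) = fejerTri δ v := by simp [fejerTri]
    rw [e, Complex.ofReal_mul (fejerTri δ v), Complex.ofReal_cos, Complex.cos]
    push_cast
    ring_nf
  simp_rw [h3] at h2
  rw [integral_const_mul, integral_complex_ofReal] at h2
  exact (mul_left_cancel₀ two_ne_zero h2).symm

lemma fejerPhi_int {δ : ℝ} (hδ : 0 < δ) : Integrable (fejerPhi δ) := by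
  have h0 : π * δ ≠ 0 := by positivity
  have h := (integrable_inv_one_add_sq.comp_mul_left' h0).const_mul 2
  refine h.mono' ?_ ?_
  · apply Measurable.aestronglyMeasurable
    unfold fejerPhi
    fun_prop
  · refine Filter.Eventually.of_forall fun x => ?_
    unfold fejerPhi
    rw [Real.norm_of_nonneg (by positivity)]
    generalize π * δ * x = u
    rcases eq_or_ne u 0 with rfl | hu
    · simp
    have hu2 : 0 < u ^ 2 := by positivity
    rw [div_pow, ← div_eq_mul_inv, div_le_div_iff₀ hu2 (by positivity)]
    have a : Real.sin u ^ 2 ≤ u ^ 2 := sq_le_sq.2 Real.abs_sin_le_abs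
    have b := Real.sin_sq_le_one u
    nlinarith

lemma fejer_inv {δ : ℝ} (hδ : 0 < δ) (y : ℝ) :
    ∫ x, fejerPhi δ x * Real.cos (2 * π * x * y) = fejerTri δ y := by
  set F := FourierTransform.fourier (fun y => (fejerTri δ y : ℂ)) with hF
  have hae : (fun x => (fejerPhi δ x : ℂ)) =ᵐ[volume] F := by
    filter_upwards [Measure.ae_ne volume (0:ℝ)] with x hx
    exact (fejer_ft hδ hx).symm
  have hFi : Integrable F := (fejerPhi_int hδ).ofReal.congr hae
  have hc : Continuous (fun y => (fejerTri δ y : ℂ)) :=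
    Complex.continuous_ofReal.comp (fejerTri_cont δ)
  have h := congrFun (hc.fourierInv_fourier_eq (fejerTri_int hδ).ofReal hFi) y
  rw [← hF, fourierInv_eq_fourier_neg, fourier_real_eq_integral_exp_smul] at h
  have h2 : ∫ v, Complex.exp (↑(-2 * π * v * -y) * Complex.I) • F v =
      ∫ v, Complex.exp (↑(2 * π * v * y) * Complex.I) * (fejerPhi δ v : ℂ) := by
    apply integral_congr_ae
    filter_upwards [hae] with v hv
    simp only [smul_eq_mul, ← hv]
    ring_nf
  rw [h2] at h
  have hi : Integrable fun v =>
      Complex.exp (↑(2 * π * v * y) * Complex.I) * (fejerPhi δ v : ℂ) := by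
    refine (fejerPhi_int hδ).ofReal.bdd_mul (c := 1) (𝕜 := ℂ) ?_ ?_
    · exact Continuous.aestronglyMeasurable (by fun_prop)
    · refine Filter.Eventually.of_forall fun v => ?_
      rw [Complex.norm_exp_ofReal_mul_I]
  have h3 := integral_re hi
  rw [h] at h3
  simp only [RCLike.re_to_complex, Complex.ofReal_re, Complex.re_mul_ofReal,
    Complex.exp_ofReal_mul_I_re] at h3
  rw [← h3]
  simp_rw [mul_comm]

theorem fejer_SO_even (δ : ℝ) (hδ : 1 ≤ δ) :
    (∫ x : ℝ, (Real.sin (Real.pi * δ * x) / (Real.pi * δ * x)) ^ 2 *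
        (1 + Real.sin (2 * Real.pi * x) / (2 * Real.pi * x))) =
      2 / δ - 1 / (2 * δ ^ 2) := by
  have hp : 0 < δ := by linarith
  have hφ := fejerPhi_int hp
  have h0 : ∫ x, fejerPhi δ x = 1 / δ := by
    have := fejer_inv hp 0
    simpa [fejerTri] using this
  have hint : Integrable (Function.uncurry fun x y => fejerPhi δ x * Real.cos (2 * π * x * y))
      (volume.prod (volume.restrict (Set.Ioc (0:ℝ) 1))) := by
    have := hφ.comp_fst (volume.restrict (Set.Ioc (0:ℝ) 1))
    refine this.mul_bdd (c := 1) ?_ ?_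
    · exact Continuous.aestronglyMeasurable (by fun_prop)
    · exact Filter.Eventually.of_forall fun v => Real.abs_cos_le_one _
  have hcos : ∀ x : ℝ, x ≠ 0 → ∫ y in Set.Ioc (0:ℝ) 1, fejerPhi δ x * Real.cos (2 * π * x * y) =
      fejerPhi δ x * (Real.sin (2 * π * x) / (2 * π * x)) := by
    intro x hx
    have hw : 2 * π * x ≠ 0 := by positivity
    rw [integral_const_mul, ← intervalIntegral.integral_of_le zero_le_one,
      intervalIntegral.integral_comp_mul_left _ hw]
    simp [div_eq_inv_mul]
  have hae : (fun x => ∫ y in Set.Ioc (0:ℝ) 1, fejerPhi δ x * Real.cos (2 * π * x * y)) =ᵐ[volume]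
      fun x => fejerPhi δ x * (Real.sin (2 * π * x) / (2 * π * x)) := by
    filter_upwards [Measure.ae_ne volume (0:ℝ)] with x hx
    exact hcos x hx
  have hi2 : Integrable fun x => fejerPhi δ x * (Real.sin (2 * π * x) / (2 * π * x)) :=
    hint.integral_prod_left.congr hae
  have h1 : ∫ x, fejerPhi δ x * (Real.sin (2 * π * x) / (2 * π * x)) = 1 / δ - 1 / (2 * δ ^ 2) := by
    rw [← integral_congr_ae hae, integral_integral_swap hint]
    simp_rw [fejer_inv hp]
    rw [← intervalIntegral.integral_of_le zero_le_one]
    have : ∫ y in (0:ℝ)..1, fejerTri δ y = ∫ y in (0:ℝ)..1, (1 / δ - y * (1 / δ ^ 2)) := by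
      apply intervalIntegral.integral_congr
      intro y hy
      rw [Set.uIcc_of_le zero_le_one] at hy
      have : y / δ ≤ 1 := by rw [div_le_one hp]; linarith [hy.2]
      simp only [fejerTri, abs_of_nonneg hy.1]
      rw [max_eq_left (by linarith)]
      field_simp
    rw [this, intervalIntegral.integral_sub (by simp)
      (Continuous.intervalIntegrable (by fun_prop) _ _),
      intervalIntegral.integral_mul_const, integral_id]
    simp
    ring
  have h2 : (fun x : ℝ => (Real.sin (Real.pi * δ * x) / (Real.pi * δ * x)) ^ 2 *
        (1 + Real.sin (2 * Real.pi * x) / (2 * Real.pi * x))) =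
      fun x => fejerPhi δ x + fejerPhi δ x * (Real.sin (2 * π * x) / (2 * π * x)) := by
    funext x
    simp only [fejerPhi]
    ring
  rw [h2, integral_add hφ hi2, h0, h1]
  ring
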